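/- Let N ≥ 1 be an integer, q ∈ (0,1], μ ∈ [0,1], γ > 0, and v = 1 − e^{−1/2}. Consider the two-stage random variable E defined as follows: first draw Y ~ Binomial(N, q); if Y = n ≥ 1, draw n i.i.d. random variables B₁,…,B_n each taking value +1 with probability (1+μ)/2 and −1 with probability (1−μ)/2, set Z = (1/n)·∑_{i=1}^n B_i and R = max(Z, 0); if Y = 0, set R = 1; finally set E = γ·q·|μ − R|. Then for every t > 0, P(E > t) ≤ 2·exp( −v·N·t² / (γ²·q) ). (Subgaussian tail bound for the weighted acceptance-ratio estimation error of a single outcome, used in the proof of Theorem S3.) -/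

import Mathlib

open Finset

/-!
Given `Y = n`, clipping at `0` only moves the sample mean closer to `μ ≥ 0`, so Hoeffding's
inequality gives `P(|μ - R| > s | Y = n) ≤ 2 x ^ n` with `x = exp (-s² / 2)`. Averaging over `n`
turns the right-hand side into twice the binomial generating function,
`2 (1 - q + q x) ^ N ≤ 2 exp (-N q (1 - x))`, and convexity of `exp` gives
`1 - x ≥ (1 - exp (-1 / 2)) s²` for `s ≤ 1`. For `s ≥ 1` the event is null because `μ` and `R` both
lie in `[0, 1]`.
-/

section Real

theorem exp_mul_le_one_sub_mul_one_sub_exp {θ : ℝ} (hθ₀ : 0 ≤ θ) (hθ₁ : θ ≤ 1) (y : ℝ) :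
    Real.exp (θ * y) ≤ 1 - θ * (1 - Real.exp y) := by
  have convex := convexOn_exp.2 (Set.mem_univ y) (Set.mem_univ 0) hθ₀ (sub_nonneg.2 hθ₁)
    (add_sub_cancel θ 1)
  simp only [smul_eq_mul, mul_zero, add_zero, Real.exp_zero, mul_one] at convex
  linarith

theorem sum_binomial_mul_le_mul_exp {q C x : ℝ} (hq₀ : 0 ≤ q) (hq₁ : q ≤ 1) (hC : 0 ≤ C)
    (hx : 0 ≤ x) {f : ℕ → ℝ} (hf : ∀ n, f n ≤ C * x ^ n) (N : ℕ) :
    ∑ n ∈ range (N + 1), (N.choose n : ℝ) * q ^ n * (1 - q) ^ (N - n) * f n ≤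
      C * Real.exp (-(N * (q * (1 - x)))) := by
  have : 0 ≤ 1 - q := sub_nonneg.2 hq₁
  calc ∑ n ∈ range (N + 1), (N.choose n : ℝ) * q ^ n * (1 - q) ^ (N - n) * f n
      ≤ ∑ n ∈ range (N + 1), (N.choose n : ℝ) * q ^ n * (1 - q) ^ (N - n) * (C * x ^ n) := by
        gcongr with n
        exact hf n
    _ = C * (q * x + (1 - q)) ^ N := by
        rw [add_pow, mul_sum]
        exact sum_congr rfl fun n _ ↦ by ring
    _ ≤ C * Real.exp (-(q * (1 - x))) ^ N := by
        gcongr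
        linarith [Real.add_one_le_exp (-(q * (1 - x)))]
    _ = C * Real.exp (-(N * (q * (1 - x)))) := by
        rw [← Real.exp_nat_mul, mul_neg]

end Real

/-- The acceptance-ratio estimate `R` of the mean from samples `x`: their average, clipped from
below at `0`, with the convention that it is `1` when there is no sample. -/
noncomputable def acceptanceRatio {n : ℕ} (x : Fin n → ℝ) : ℝ :=
  if n = 0 then 1 else max ((∑ i, x i) / n) 0

theorem acceptanceRatio_of_ne_zero {n : ℕ} (hn : n ≠ 0) (x : Fin n → ℝ) :
    acceptanceRatio x = max ((∑ i, x i) / n) 0 :=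
  if_neg hn

theorem acceptanceRatio_mem_Icc {n : ℕ} {x : Fin n → ℝ} (hx : ∀ i, x i ≤ 1) :
    acceptanceRatio x ∈ Set.Icc 0 1 := by
  unfold acceptanceRatio
  split_ifs
  · exact Set.right_mem_Icc.2 zero_le_one
  · have sum_le : ∑ i, x i ≤ n := by simpa using sum_le_card_nsmul univ x 1 fun i _ ↦ hx i
    exact ⟨le_max_right _ _, max_le (div_le_one_of_le₀ sum_le n.cast_nonneg) zero_le_one⟩

theorem mul_abs_sub_acceptanceRatio_le {n : ℕ} {m : ℝ} (hm : 0 ≤ m) (x : Fin n → ℝ) :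
    n * |m - acceptanceRatio x| ≤ |∑ i, (x i - m)| := by
  rcases eq_or_ne n 0 with rfl | hn
  · simp
  calc n * |m - acceptanceRatio x|
      = n * |max ((∑ i, x i) / n) 0 - max m 0| := by
        rw [acceptanceRatio_of_ne_zero hn, abs_sub_comm, max_eq_left hm]
    _ ≤ n * |(∑ i, x i) / n - m| := by
        gcongr ?_ * ?_
        exact abs_max_sub_max_le_abs ((∑ i, x i) / n) m 0
    _ = |∑ i, (x i - m)| := by
        rw [← Nat.abs_cast n, ← abs_mul, Nat.abs_cast, mul_sub,
          mul_div_cancel₀ _ (Nat.cast_ne_zero.2 hn)]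
        simp

open MeasureTheory ProbabilityTheory

section Concentration

variable {Ω : Type*} [MeasurableSpace Ω] {P : Measure Ω} {X : Ω → ℝ}

theorem measureReal_le_abs_le_of_hasSubgaussianMGF {c : NNReal} (hX : HasSubgaussianMGF X c P)
    {ε : ℝ} (hε : 0 ≤ ε) :
    P.real {ω | ε ≤ |X ω|} ≤ 2 * Real.exp (-ε ^ 2 / (2 * c)) := by
  have union : {ω | ε ≤ |X ω|} = {ω | ε ≤ X ω} ∪ {ω | ε ≤ (-X) ω} :=
    Set.ext fun _ ↦ le_abs (α := ℝ)
  rw [union, two_mul]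
  exact (measureReal_union_le _ _).trans
    (add_le_add (hX.measure_ge_le hε) (hX.neg.measure_ge_le hε))

variable [IsProbabilityMeasure P]

theorem measureReal_pi_le_abs_sum_sub_integral_le {ι : Type*} [Fintype ι] {a b : ℝ}
    (hX : AEMeasurable X P) (hab : ∀ᵐ ω ∂P, X ω ∈ Set.Icc a b) {ε : ℝ} (hε : 0 ≤ ε) :
    (Measure.pi fun _ : ι ↦ P).real {ω | ε ≤ |∑ i, (X (ω i) - P[X])|} ≤
      2 * Real.exp (-2 * ε ^ 2 / (Fintype.card ι * (b - a) ^ 2)) := by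
  have subgaussian (i : ι) : HasSubgaussianMGF (fun ω : ι → Ω ↦ X (ω i) - P[X])
      ((‖b - a‖₊ / 2) ^ 2) (Measure.pi fun _ ↦ P) := by
    have eval_preserving := measurePreserving_eval (fun _ : ι ↦ P) i
    refine .of_map (X := fun ω : Ω ↦ X ω - P[X]) eval_preserving.aemeasurable ?_
    rw [eval_preserving.map_eq]
    exact hasSubgaussianMGF_of_mem_Icc hX hab
  have indep : iIndepFun (fun i (ω : ι → Ω) ↦ X (ω i) - P[X]) (Measure.pi fun _ ↦ P) :=
    iIndepFun_pi (X := fun _ ω ↦ X ω - P[X]) fun _ ↦ hX.sub_const _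
  have sum_subgaussian := HasSubgaussianMGF.sum_of_iIndepFun indep (s := univ)
    fun i _ ↦ subgaussian i
  convert measureReal_le_abs_le_of_hasSubgaussianMGF sum_subgaussian hε using 3
  simp only [sum_const, card_univ, nsmul_eq_mul, NNReal.coe_mul, NNReal.coe_natCast,
    NNReal.coe_pow, NNReal.coe_div, coe_nnnorm, Real.norm_eq_abs, NNReal.coe_ofNat, div_pow, sq_abs]
  field_simp

theorem measureReal_lt_abs_sub_acceptanceRatio_le (hX : AEMeasurable X P)
    (hX₁ : ∀ᵐ ω ∂P, X ω ∈ Set.Icc (-1) 1) (hmean : 0 ≤ P[X]) {s : ℝ} (hs : 0 ≤ s) (n : ℕ) :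
    (Measure.pi fun _ : Fin n ↦ P).real {ω | s < |P[X] - acceptanceRatio (X ∘ ω)|} ≤
      2 * Real.exp (-s ^ 2 / 2) ^ n := by
  have subset : {ω : Fin n → Ω | s < |P[X] - acceptanceRatio (X ∘ ω)|} ⊆
      {ω | n * s ≤ |∑ i, (X (ω i) - P[X])|} := fun ω hω ↦
    (mul_le_mul_of_nonneg_left (le_of_lt hω) n.cast_nonneg).trans
      (mul_abs_sub_acceptanceRatio_le hmean (X ∘ ω))
  calc (Measure.pi fun _ : Fin n ↦ P).real {ω | s < |P[X] - acceptanceRatio (X ∘ ω)|}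
      ≤ (Measure.pi fun _ : Fin n ↦ P).real {ω | n * s ≤ |∑ i, (X (ω i) - P[X])|} :=
        measureReal_mono subset
    _ ≤ 2 * Real.exp (-2 * (n * s) ^ 2 / (Fintype.card (Fin n) * (1 - -1) ^ 2)) :=
        measureReal_pi_le_abs_sum_sub_integral_le hX hX₁ (by positivity)
    _ = 2 * Real.exp (-s ^ 2 / 2) ^ n := by
        rw [← Real.exp_nat_mul, Fintype.card_fin]
        congr 2
        rcases eq_or_ne n 0 with rfl | hn
        · simp
        · field_simp
          ring

theorem measureReal_lt_abs_sub_acceptanceRatio_eq_zero (hX : AEMeasurable X P)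
    (hX₁ : ∀ᵐ ω ∂P, X ω ∈ Set.Icc (-1) 1) (hmean : 0 ≤ P[X]) {s : ℝ} (hs : 1 ≤ s) (n : ℕ) :
    (Measure.pi fun _ : Fin n ↦ P).real {ω | s < |P[X] - acceptanceRatio (X ∘ ω)|} = 0 := by
  have hmean₁ : P[X] ≤ 1 :=
    ((convex_Icc (-1) 1).integral_mem isClosed_Icc hX₁ (.of_mem_Icc (-1) 1 hX hX₁)).2
  have le_one : ∀ᵐ ω ∂Measure.pi fun _ : Fin n ↦ P, ∀ i, X (ω i) ≤ 1 :=
    ae_all_iff.2 fun i ↦ (Measure.quasiMeasurePreserving_eval (fun _ ↦ P) i).ae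
      (hX₁.mono fun _ h ↦ h.2)
  refine (measureReal_eq_zero_iff).2 (measure_eq_zero_iff_ae_notMem.2 ?_)
  filter_upwards [le_one] with ω hω
  have ratio_mem : acceptanceRatio (X ∘ ω) ∈ Set.Icc 0 1 := acceptanceRatio_mem_Icc hω
  exact not_lt.2 <| (abs_sub_le_of_le_of_le hmean hmean₁ ratio_mem.1 ratio_mem.2).trans
    (by simpa using hs)

theorem sum_binomial_mul_measureReal_lt_abs_sub_acceptanceRatio_le (hX : AEMeasurable X P)
    (hX₁ : ∀ᵐ ω ∂P, X ω ∈ Set.Icc (-1) 1) (hmean : 0 ≤ P[X])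
    {q : ℝ} (hq₀ : 0 ≤ q) (hq₁ : q ≤ 1) {s : ℝ} (hs : 0 ≤ s) (N : ℕ) :
    ∑ n ∈ range (N + 1), (N.choose n : ℝ) * q ^ n * (1 - q) ^ (N - n) *
        (Measure.pi fun _ : Fin n ↦ P).real {ω | s < |P[X] - acceptanceRatio (X ∘ ω)|} ≤
      2 * Real.exp (-((1 - Real.exp (-1 / 2)) * N * q * s ^ 2)) := by
  rcases le_total 1 s with one_le_s | s_le_one
  · simp only [measureReal_lt_abs_sub_acceptanceRatio_eq_zero hX hX₁ hmean one_le_s, mul_zero,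
      sum_const_zero]
    positivity
  have exp_le : Real.exp (-s ^ 2 / 2) ≤ 1 - s ^ 2 * (1 - Real.exp (-1 / 2)) := by
    convert exp_mul_le_one_sub_mul_one_sub_exp (sq_nonneg s) (pow_le_one₀ hs s_le_one) (-1 / 2)
      using 2
    ring
  calc _ ≤ 2 * Real.exp (-(N * (q * (1 - Real.exp (-s ^ 2 / 2))))) :=
        sum_binomial_mul_le_mul_exp hq₀ hq₁ zero_le_two (Real.exp_nonneg _)
          (measureReal_lt_abs_sub_acceptanceRatio_le hX hX₁ hmean hs) N
    _ ≤ 2 * Real.exp (-(N * (q * (s ^ 2 * (1 - Real.exp (-1 / 2)))))) := by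
        gcongr
        linarith
    _ = 2 * Real.exp (-((1 - Real.exp (-1 / 2)) * N * q * s ^ 2)) := by ring_nf

theorem acceptance_ratio_error_tail_general (hX : AEMeasurable X P)
    (hX₁ : ∀ᵐ ω ∂P, X ω ∈ Set.Icc (-1) 1) (hmean : 0 ≤ P[X])
    {q : ℝ} (hq₀ : 0 < q) (hq₁ : q ≤ 1) {γ : ℝ} (hγ : 0 < γ) {t : ℝ} (ht : 0 ≤ t) (N : ℕ) :
    ∑ n ∈ range (N + 1), (N.choose n : ℝ) * q ^ n * (1 - q) ^ (N - n) *
        (Measure.pi fun _ : Fin n ↦ P).real {ω | γ * q * |P[X] - acceptanceRatio (X ∘ ω)| > t} ≤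
      2 * Real.exp (-((1 - Real.exp (-1 / 2)) * N * t ^ 2) / (γ ^ 2 * q)) := by
  have hγq : 0 < γ * q := mul_pos hγ hq₀
  simp only [gt_iff_lt, ← div_lt_iff₀' hγq]
  convert sum_binomial_mul_measureReal_lt_abs_sub_acceptanceRatio_le hX hX₁ hmean hq₀.le hq₁
    (div_nonneg ht hγq.le) N using 3
  field_simp

end Concentration

section Bernoulli

theorem measureReal_pi_eq_sum_prod_mul_ite {ι : Type*} [Fintype ι] [DecidableEq ι] {α : Type*}
    [Fintype α] [MeasurableSpace α] [MeasurableSingletonClass α] (P : ι → Measure α)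
    [∀ i, SigmaFinite (P i)] (r : (ι → α) → Prop) [DecidablePred r] :
    (Measure.pi P).real {b | r b} =
      ∑ b, (∏ i, (P i).real {b i}) * if r b then 1 else 0 := by
  have filter_coe : {b | r b} = ((univ.filter r : Finset (ι → α)) : Set (ι → α)) := by simp
  rw [filter_coe, ← sum_measureReal_singleton]
  simp [sum_filter, measureReal_def, Measure.pi_singleton, ENNReal.toReal_prod]

variable {p : unitInterval} {μ : ℝ}

theorem integral_sign_bernoulliMeasure_true_false (hp : (p : ℝ) = (1 + μ) / 2) :
    ∫ b, (if b then 1 else -1 : ℝ) ∂bernoulliMeasure true false p = μ := by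
  rw [integral_bernoulliMeasure, hp]
  simp only [↓reduceIte, Bool.false_eq_true, smul_eq_mul]
  ring

theorem bernoulliMeasure_true_false_real_singleton (hp : (p : ℝ) = (1 + μ) / 2) (b : Bool) :
    (bernoulliMeasure true false p).real {b} = if b then (1 + μ) / 2 else (1 - μ) / 2 := by
  cases b
  · have hp' : 1 - (p : ℝ) = (1 - μ) / 2 := by rw [hp]; ring
    simp [hp']
  · simp [hp]

theorem sum_range_binomial_mul_measureReal_pi_bernoulliMeasure (hp : (p : ℝ) = (1 + μ) / 2)
    (q c m t : ℝ) (N : ℕ) :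
    ∑ n ∈ range (N + 1), (N.choose n : ℝ) * q ^ n * (1 - q) ^ (N - n) *
        (Measure.pi fun _ : Fin n ↦ bernoulliMeasure true false p).real
          {b | c * |m - acceptanceRatio ((fun b ↦ if b then 1 else -1) ∘ b)| > t} =
      (if c * |m - 1| > t then (1 - q) ^ N else 0) +
        ∑ n ∈ Icc 1 N, (N.choose n : ℝ) * q ^ n * (1 - q) ^ (N - n) *
          ∑ b : Fin n → Bool, (∏ i, if b i then (1 + μ) / 2 else (1 - μ) / 2) *
            if c * |m - max ((∑ i, if b i then (1 : ℝ) else -1) / n) 0| > t then 1 else 0 := by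
  simp only [measureReal_pi_eq_sum_prod_mul_ite, bernoulliMeasure_true_false_real_singleton hp]
  rw [range_eq_Ico, sum_eq_sum_Ico_succ_bot N.succ_pos]
  congr 1
  · simp [acceptanceRatio]
  · refine sum_congr rfl fun n hn ↦ ?_
    have hn₀ : n ≠ 0 := Nat.one_le_iff_ne_zero.1 (mem_Icc.1 hn).1
    simp only [acceptanceRatio_of_ne_zero hn₀, Function.comp_apply]

end Bernoulli

/-- Subgaussian tail bound for the weighted acceptance-ratio estimation error of a
single outcome (used in the proof of Theorem S3). The two-stage random variable `E`
is: draw `Y ~ Bin(N, q)`; given `Y = n ≥ 1` draw `n` i.i.d. ±1 variables (`+1` with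
probability `(1+μ)/2`, `−1` with probability `(1−μ)/2`), set `Z` to their mean and
`R = max(Z, 0)`; if `Y = 0` set `R = 1`; finally `E = γ·q·|μ − R|`. Then for `t > 0`,
`P(E > t) ≤ 2·exp(−v·N·t²/(γ²·q))` with `v = 1 − e^{−1/2}`, the probability written
as an explicit sum. -/
theorem acceptance_ratio_error_tail (N : ℕ) (hN : 1 ≤ N)
    (q : ℝ) (hq0 : 0 < q) (hq1 : q ≤ 1)
    (μ : ℝ) (hμ0 : 0 ≤ μ) (hμ1 : μ ≤ 1)
    (γ : ℝ) (hγ : 0 < γ)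
    (v : ℝ) (hv : v = 1 - Real.exp (-1 / 2))
    (t : ℝ) (ht : 0 < t) :
    (if γ * q * |μ - 1| > t then (1 - q) ^ N else 0) +
      ∑ n ∈ Finset.Icc 1 N, (N.choose n : ℝ) * q ^ n * (1 - q) ^ (N - n) *
        ∑ b : Fin n → Bool,
          (∏ i, (if b i then (1 + μ) / 2 else (1 - μ) / 2)) *
            (if γ * q * |μ - max ((∑ i, (if b i then (1 : ℝ) else -1)) / (n : ℝ)) 0| > t
             then 1 else 0)
      ≤ 2 * Real.exp (-(v * N * t ^ 2) / (γ ^ 2 * q)) := by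
  let p : unitInterval := ⟨(1 + μ) / 2, by linarith, by linarith⟩
  have mean := integral_sign_bernoulliMeasure_true_false (p := p) rfl
  rw [hv, ← sum_range_binomial_mul_measureReal_pi_bernoulliMeasure (p := p) rfl]
  simpa only [mean] using acceptance_ratio_error_tail_general
    (P := bernoulliMeasure true false p) .of_discrete (ae_of_all _ fun b ↦ by cases b <;> simp)
    (hμ0.trans_eq mean.symm) hq0 hq1 hγ ht.le N
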